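/- Let a > 0 and b₁ ≤ b₂ be real numbers, and let ρ₁, ρ₂ : [0,∞) → (0,∞) be differentiable with ρᵢ'(t) = a·log ρᵢ(t) + bᵢ for all t ≥ 0, ρ₁(0) ≤ ρ₂(0), and a·log ρ₁(0) + b₁ > 0. Then (i) ρ₁(t) ≤ ρ₂(t) for all t ≥ 0; (ii) there exists a constant c > 0 such that ρ₂(t) − ρ₁(t) ≤ c·(1 + t·log(log(3 + t))) for all t ≥ 0; and (iii) (ρ₂(t) − ρ₁(t))/ρ₁(t) → 0 as t → ∞. -/

import Mathlib

open Set Filter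

/-!
Rescaling time in an autonomous equation multiplies its speed. So if `ρ₁` moves with positive speed
then, for `s < 1`, `t ↦ ρ₁ (t * s)` is a strict subsolution and stays below `ρ₂`; letting `s → 1`
gives `ρ₁ ≤ ρ₂` with no Lipschitz or uniqueness argument.

The speed of `ρ₁` stays above a positive constant, so `ρ₁ t ≥ m * (1 + t)`. Where the gap equals
`K * (1 + t)`, the ratio `ρ₂ / ρ₁` is then at most `1 + K / m`, so the gap grows at rate at most
`a * log (1 + K / m) + (b₂ - b₁)`, which is less than `K` once `K` is large: the gap is `O(t)`.
Since `ρ₁ → ∞`, its speed is unbounded as well, so `t = o(ρ₁ t)` and the gap is `o(ρ₁)`.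
-/

open Asymptotics Topology

theorem le_of_hasDerivWithinAt_Ici_of_eq_imp_lt {f f' g g' : ℝ → ℝ} {t₀ t : ℝ}
    (hf : ∀ s, t₀ ≤ s → HasDerivWithinAt f (f' s) (Ici t₀) s)
    (hg : ∀ s, t₀ ≤ s → HasDerivWithinAt g (g' s) (Ici t₀) s)
    (hinit : f t₀ ≤ g t₀) (hlt : ∀ s, t₀ ≤ s → f s = g s → f' s < g' s) (ht : t₀ ≤ t) :
    f t ≤ g t :=
  image_le_of_deriv_right_lt_deriv_boundary'
    (fun s hs => (hf s hs.1).continuousWithinAt.mono Icc_subset_Ici_self)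
    (fun s hs => (hf s hs.1).mono (Ici_subset_Ici.2 hs.1)) hinit
    (fun s hs => (hg s hs.1).continuousWithinAt.mono Icc_subset_Ici_self)
    (fun s hs => (hg s hs.1).mono (Ici_subset_Ici.2 hs.1))
    (fun s hs => hlt s hs.1) ⟨ht, le_rfl⟩

theorem hasDerivAt_add_mul_sub (p q t₀ t : ℝ) : HasDerivAt (fun s => p + q * (s - t₀)) q t := by
  simpa using (((hasDerivAt_id t).sub_const t₀).const_mul q).const_add p

theorem isLittleO_id_of_tendsto_deriv_atTop {f f' : ℝ → ℝ}
    (hf : ∀ᶠ t in atTop, HasDerivAt f (f' t) t) (hf' : Tendsto f' atTop atTop) :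
    (fun t : ℝ => t) =o[atTop] f := by
  refine isLittleO_iff.2 fun ε hε => ?_
  obtain ⟨T, hT⟩ := eventually_atTop.1 (hf.and (hf'.eventually_gt_atTop (2 / ε)))
  have hline : ∀ t, T ≤ t → f T + 2 / ε * (t - T) ≤ f t := fun t ht =>
    le_of_hasDerivWithinAt_Ici_of_eq_imp_lt
      (fun s _ => (hasDerivAt_add_mul_sub (f T) (2 / ε) T s).hasDerivWithinAt)
      (fun s hs => (hT s hs).1.hasDerivWithinAt) (by simp) (fun s hs _ => (hT s hs).2) ht
  filter_upwards [eventually_ge_atTop T, eventually_ge_atTop 0,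
    eventually_ge_atTop (2 * T - ε * f T)] with t htT ht htf
  have hmul : ε * (f T + 2 / ε * (t - T)) = ε * f T + 2 * (t - T) := by field_simp
  calc ‖t‖ = t := Real.norm_of_nonneg ht
    _ ≤ ε * (f T + 2 / ε * (t - T)) := by linarith
    _ ≤ ε * ‖f t‖ :=
      mul_le_mul_of_nonneg_left ((hline t htT).trans (Real.le_norm_self _)) hε.le

theorem isBigO_id_of_le_mul_one_add {g : ℝ → ℝ} {K : ℝ} (hg : ∀ t, 0 ≤ t → 0 ≤ g t)
    (hgK : ∀ t, 0 ≤ t → g t ≤ K * (1 + t)) : g =O[atTop] fun t => t := by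
  have hg' : g =O[atTop] fun t => 1 + t := by
    refine IsBigO.of_bound K ?_
    filter_upwards [eventually_ge_atTop 0] with t ht
    rw [Real.norm_of_nonneg (hg t ht), Real.norm_of_nonneg (by positivity)]
    exact hgK t ht
  exact hg'.trans ((isLittleO_const_id_atTop 1).isBigO.add (isBigO_refl _ _))

theorem exists_one_add_le_mul_one_add_mul_log_log :
    ∃ c : ℝ, 0 < c ∧ ∀ t : ℝ, 0 ≤ t → 1 + t ≤ c * (1 + t * Real.log (Real.log (3 + t))) := by
  have hlog : 1 < Real.log 3 :=
    (Real.lt_log_iff_exp_lt (by norm_num)).2 Real.exp_one_lt_three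
  set δ := Real.log (Real.log 3)
  have hδ : 0 < δ := Real.log_pos hlog
  refine ⟨1 + 1 / δ, by positivity, fun t ht => ?_⟩
  have hmono : δ ≤ Real.log (Real.log (3 + t)) :=
    Real.log_le_log (by linarith) (Real.log_le_log (by norm_num) (by linarith))
  calc 1 + t ≤ 1 + t + (1 / δ + t * δ) := le_add_of_nonneg_right (by positivity)
    _ = (1 + 1 / δ) * (1 + t * δ) := by field_simp; ring
    _ ≤ (1 + 1 / δ) * (1 + t * Real.log (Real.log (3 + t))) := by gcongr

section Autonomous

variable {F G f g : ℝ → ℝ}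

theorem add_mul_le_of_isIntegralCurveOn {v t : ℝ}
    (hf : IsIntegralCurveOn f (fun _ => F) (Ici 0)) (hv : 0 ≤ v)
    (hvF : ∀ x, f 0 ≤ x → v < F x) (ht : 0 ≤ t) : f 0 + v * t ≤ f t := by
  have hline := le_of_hasDerivWithinAt_Ici_of_eq_imp_lt
    (fun s _ => (hasDerivAt_add_mul_sub (f 0) v 0 s).hasDerivWithinAt) hf (by simp)
    (fun s hs heq => hvF _ (heq ▸ le_add_of_nonneg_right (by simpa using mul_nonneg hv hs))) ht
  simpa only [sub_zero] using hline

theorem pos_speed_of_isIntegralCurveOn {t : ℝ}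
    (hf : IsIntegralCurveOn f (fun _ => F) (Ici 0)) (hF : ∀ x, f 0 ≤ x → 0 < F x) (ht : 0 ≤ t) :
    0 < F (f t) :=
  hF _ (by simpa using add_mul_le_of_isIntegralCurveOn hf le_rfl hF ht)

theorem exists_mul_one_add_le_of_isIntegralCurveOn
    (hf : IsIntegralCurveOn f (fun _ => F) (Ici 0)) (hF : MonotoneOn F (Ici (f 0)))
    (hf0 : 0 < f 0) (hFf0 : 0 < F (f 0)) :
    ∃ m : ℝ, 0 < m ∧ ∀ t, 0 ≤ t → m * (1 + t) ≤ f t := by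
  refine ⟨min (f 0) (F (f 0) / 2), lt_min hf0 (half_pos hFf0), fun t ht => ?_⟩
  calc min (f 0) (F (f 0) / 2) * (1 + t)
      = min (f 0) (F (f 0) / 2) + min (f 0) (F (f 0) / 2) * t := by ring
    _ ≤ f 0 + F (f 0) / 2 * t := by
      gcongr
      · exact min_le_left _ _
      · exact min_le_right _ _
    _ ≤ f t := add_mul_le_of_isIntegralCurveOn hf (half_pos hFf0).le
      (fun x hx => (half_lt_self hFf0).trans_le (hF self_mem_Ici hx hx)) ht

theorem le_of_isIntegralCurveOn_of_pos_speed {t : ℝ}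
    (hf : IsIntegralCurveOn f (fun _ => F) (Ici 0))
    (hg : IsIntegralCurveOn g (fun _ => G) (Ici 0))
    (hF : ∀ s, 0 ≤ s → 0 < F (f s)) (hFG : ∀ s, 0 ≤ s → F (f s) ≤ G (f s))
    (hinit : f 0 ≤ g 0) (ht : 0 ≤ t) : f t ≤ g t := by
  have hrescaled : ∀ s ∈ Ioo (0 : ℝ) 1, f (t * s) ≤ g t := by
    rintro s ⟨hs0, hs1⟩
    have hmaps : Ici (0 : ℝ) ⊆ {u | u * s ∈ Ici 0} := fun u hu => mul_nonneg hu hs0.le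
    refine le_of_hasDerivWithinAt_Ici_of_eq_imp_lt ((hf.comp_mul s).mono hmaps) hg
      (by simpa using hinit) (fun u hu heq => ?_) ht
    have heq' : f (u * s) = g u := heq
    calc s * F (f (u * s)) < F (f (u * s)) := mul_lt_of_lt_one_left (hF _ (hmaps hu)) hs1
      _ ≤ G (g u) := heq' ▸ hFG _ (hmaps hu)
  have hlim : Tendsto (fun s => f (t * s)) (𝓝[<] 1) (𝓝 (f t)) := by
    refine (hf.continuousWithinAt ht).tendsto.comp (tendsto_nhdsWithin_iff.2 ⟨?_, ?_⟩)
    · simpa using (tendsto_id.const_mul t).mono_left (nhdsWithin_le_nhds (a := (1 : ℝ)))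
    · filter_upwards [Ioo_mem_nhdsLT one_pos] with s hs using mul_nonneg ht hs.1.le
  exact le_of_tendsto hlim (mem_of_superset (Ioo_mem_nhdsLT one_pos) hrescaled)

theorem isLittleO_id_of_isIntegralCurveOn
    (hf : IsIntegralCurveOn f (fun _ => F) (Ici 0)) (hlim : Tendsto f atTop atTop)
    (hF : Tendsto F atTop atTop) : (fun t : ℝ => t) =o[atTop] f := by
  refine isLittleO_id_of_tendsto_deriv_atTop ?_ (hF.comp hlim)
  filter_upwards [eventually_gt_atTop 0] with t ht
  exact (hf t ht.le).hasDerivAt (Ici_mem_nhds ht)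

end Autonomous

/-- The speed of a sphere of radius `x` under the logarithmic curvature flow; the constant `b`
encodes the value (infimum or supremum) of the prescribed function. -/
noncomputable def logSpeed (a b x : ℝ) : ℝ := a * Real.log x + b

section LogSpeed

variable {a b₁ b₂ : ℝ} {ρ₁ ρ₂ : ℝ → ℝ}

theorem monotoneOn_logSpeed (ha : 0 ≤ a) (b : ℝ) : MonotoneOn (logSpeed a b) (Ioi 0) :=
  fun _ hx _ _ hxy => by
    unfold logSpeed
    gcongr

theorem tendsto_logSpeed_atTop (ha : 0 < a) (b : ℝ) : Tendsto (logSpeed a b) atTop atTop :=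
  tendsto_atTop_add_const_right _ b (Real.tendsto_log_atTop.const_mul_atTop ha)

theorem isLittleO_logSpeed_id_atTop (a b : ℝ) : logSpeed a b =o[atTop] fun x => x :=
  (Real.isLittleO_log_id_atTop.const_mul_left a).add (isLittleO_const_id_atTop b)

theorem eventually_logSpeed_lt_mul_sub_one {m : ℝ} (hm : 0 < m) (a b : ℝ) :
    ∀ᶠ x in atTop, logSpeed a b x < m * (x - 1) := by
  filter_upwards [(isLittleO_logSpeed_id_atTop a (b + m)).bound (half_pos hm),
    eventually_gt_atTop 0] with x hbound hx
  rw [Real.norm_of_nonneg hx.le] at hbound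
  have hlt : logSpeed a (b + m) x < m * x :=
    (Real.le_norm_self _).trans_lt (hbound.trans_lt (by gcongr; exact half_lt_self hm))
  unfold logSpeed at hlt ⊢
  linarith

theorem exists_sub_le_mul_one_add_of_logSpeed {m : ℝ} (ha : 0 ≤ a) (hm : 0 < m)
    (hlow : ∀ t, 0 ≤ t → m * (1 + t) ≤ ρ₁ t)
    (hρ₁ : IsIntegralCurveOn ρ₁ (fun _ => logSpeed a b₁) (Ici 0))
    (hρ₂ : IsIntegralCurveOn ρ₂ (fun _ => logSpeed a b₂) (Ici 0)) :
    ∃ K : ℝ, 0 < K ∧ ∀ t, 0 ≤ t → ρ₂ t - ρ₁ t ≤ K * (1 + t) := by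
  have hlin : Tendsto (fun x : ℝ => m * (x - 1)) atTop atTop :=
    (tendsto_atTop_add_const_right _ (-1) tendsto_id).const_mul_atTop hm
  obtain ⟨x, hspeed, hinit, hx⟩ := ((eventually_logSpeed_lt_mul_sub_one hm a (b₂ - b₁)).and
    ((hlin.eventually_ge_atTop (ρ₂ 0 - ρ₁ 0)).and (eventually_gt_atTop 1))).exists
  set K := m * (x - 1) with hK
  have hKpos : 0 < K := mul_pos hm (sub_pos.2 hx)
  refine ⟨K, hKpos, fun t ht => ?_⟩
  have hbarrier : ρ₂ t ≤ ρ₁ t + (K + K * (t - 0)) := by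
    refine le_of_hasDerivWithinAt_Ici_of_eq_imp_lt hρ₂
      (fun s hs => (hρ₁ s hs).add (hasDerivAt_add_mul_sub K K 0 s).hasDerivWithinAt)
      (by simpa [sub_le_iff_le_add, add_comm] using hinit) (fun s hs heq => ?_) ht
    have heq' : ρ₂ s = ρ₁ s + K * (1 + s) := by rw [heq, Pi.add_apply]; ring
    have hpos₁ : 0 < ρ₁ s := (show 0 < m * (1 + s) by positivity).trans_le (hlow s hs)
    have hratio : ρ₂ s ≤ x * ρ₁ s :=
      calc ρ₂ s = ρ₁ s + (x - 1) * (m * (1 + s)) := by rw [heq', hK]; ring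
        _ ≤ ρ₁ s + (x - 1) * ρ₁ s := by
          gcongr
          exact hlow s hs
        _ = x * ρ₁ s := by ring
    have hlog : Real.log (ρ₂ s) ≤ Real.log x + Real.log (ρ₁ s) := by
      rw [← Real.log_mul (by positivity) hpos₁.ne']
      exact Real.log_le_log (by rw [heq']; positivity) hratio
    have hscaled := mul_le_mul_of_nonneg_left hlog ha
    unfold logSpeed at hspeed ⊢
    linarith
  linarith

end LogSpeed

/-- comparison of expanding spheres, proof of Theorem 5 in the paper.
For solutions `ρ₁, ρ₂` of `ρᵢ' = a log ρᵢ + bᵢ` with `a > 0`, `b₁ ≤ b₂`,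
`ρ₁(0) ≤ ρ₂(0)` and `a log ρ₁(0) + b₁ > 0`: (i) `ρ₁ ≤ ρ₂`;
(ii) `ρ₂(t) − ρ₁(t) ≤ c (1 + t log log(3+t))`; (iii) `(ρ₂ − ρ₁)/ρ₁ → 0`. -/
theorem stmt_7 (a b₁ b₂ : ℝ) (ha : 0 < a) (hb : b₁ ≤ b₂) (ρ₁ ρ₂ : ℝ → ℝ)
    (hpos₁ : ∀ t : ℝ, 0 ≤ t → 0 < ρ₁ t)
    (hpos₂ : ∀ t : ℝ, 0 ≤ t → 0 < ρ₂ t)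
    (hode₁ : ∀ t : ℝ, 0 ≤ t →
      HasDerivWithinAt ρ₁ (a * Real.log (ρ₁ t) + b₁) (Set.Ici 0) t)
    (hode₂ : ∀ t : ℝ, 0 ≤ t →
      HasDerivWithinAt ρ₂ (a * Real.log (ρ₂ t) + b₂) (Set.Ici 0) t)
    (hinit : ρ₁ 0 ≤ ρ₂ 0)
    (h0 : 0 < a * Real.log (ρ₁ 0) + b₁) :
    (∀ t : ℝ, 0 ≤ t → ρ₁ t ≤ ρ₂ t) ∧
    (∃ c : ℝ, 0 < c ∧ ∀ t : ℝ, 0 ≤ t →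
      ρ₂ t - ρ₁ t ≤ c * (1 + t * Real.log (Real.log (3 + t)))) ∧
    Tendsto (fun t => (ρ₂ t - ρ₁ t) / ρ₁ t) atTop (nhds 0) := by
  have hr : 0 < ρ₁ 0 := hpos₁ 0 le_rfl
  have hρ₁ : IsIntegralCurveOn ρ₁ (fun _ => logSpeed a b₁) (Ici 0) := hode₁
  have hρ₂ : IsIntegralCurveOn ρ₂ (fun _ => logSpeed a b₂) (Ici 0) := hode₂
  have hmono := (monotoneOn_logSpeed ha.le b₁).mono (Ici_subset_Ioi.2 hr)
  have hspeed : ∀ t, 0 ≤ t → 0 < logSpeed a b₁ (ρ₁ t) := fun t ht =>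
    pos_speed_of_isIntegralCurveOn hρ₁
      (fun _ hx => lt_of_lt_of_le h0 (hmono self_mem_Ici hx hx)) ht
  have hle : ∀ t, 0 ≤ t → ρ₁ t ≤ ρ₂ t := fun t ht =>
    le_of_isIntegralCurveOn_of_pos_speed hρ₁ hρ₂ hspeed
      (fun s _ => add_le_add_right hb _) hinit ht
  obtain ⟨m, hm, hlow⟩ := exists_mul_one_add_le_of_isIntegralCurveOn hρ₁ hmono hr h0
  obtain ⟨K, hK, hgap⟩ := exists_sub_le_mul_one_add_of_logSpeed ha.le hm hlow hρ₁ hρ₂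
  obtain ⟨c, hc, hloglog⟩ := exists_one_add_le_mul_one_add_mul_log_log
  have htop : Tendsto ρ₁ atTop atTop :=
    tendsto_atTop_mono' _ ((eventually_ge_atTop 0).mono hlow)
      ((tendsto_atTop_add_const_left _ 1 tendsto_id).const_mul_atTop hm)
  have hsmall : (fun t : ℝ => t) =o[atTop] ρ₁ :=
    isLittleO_id_of_isIntegralCurveOn hρ₁ htop (tendsto_logSpeed_atTop ha b₁)
  refine ⟨hle, ⟨K * c, mul_pos hK hc, fun t ht => (hgap t ht).trans ?_⟩, ?_⟩
  · rw [mul_assoc]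
    exact mul_le_mul_of_nonneg_left (hloglog t ht) hK.le
  · exact ((isBigO_id_of_le_mul_one_add (fun t ht => sub_nonneg.2 (hle t ht)) hgap).trans_isLittleO
      hsmall).tendsto_div_nhds_zero
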